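/- Let q be even and let k ≥ 4 be a power of 2, and let n = k²−1. Let a ∈ F_{q^n} with N_{q^n/q}(a) = 1 and b = (∏_{i=1}^{k−1} a^{q^{ik}})^{−1}. Let h be a positive integer, N = n·h, and let V be the set of roots of P(x) = x^{q^k} − b·x^q − a·x in F_{q^N}. Then V is a k-dimensional F_q-subspace of F_{q^N}; the orbit C = {αV : α ∈ F_{q^N}, α ≠ 0} consists of exactly (q^N−1)/(q−1) distinct subspaces; and the minimum of d(U,W) = dim_{F_q}U + dim_{F_q}W − 2·dim_{F_q}(U ∩ W) over all pairs of distinct subspaces U, W ∈ C equals 2k−2. -/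

import Mathlib

open Polynomial Pointwise

lemma aux_mem_range {F E : Type*} [Field F] [Fintype F] [Field E] [Algebra F E] (x : E)
    (hx : x ^ Fintype.card F = x) : ∃ y : F, algebraMap F E y = x := by
  have h := FiniteField.roots_X_pow_card_sub_X F
  have hs : (X ^ Fintype.card F - X : F[X]).Splits := by
    rw [splits_iff_card_roots, h,
      FiniteField.X_pow_card_sub_X_natDegree_eq F Fintype.one_lt_card]
    rfl
  have h0 : (aeval x) (X ^ Fintype.card F - X : F[X]) = 0 := by simp [hx]
  exact hs.mem_range_of_isRoot
    (FiniteField.X_pow_card_sub_X_ne_zero F Fintype.one_lt_card)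
    (by simpa [IsRoot] using h0)

lemma aux_iter {E : Type*} [Field E] [CharP E 2] (s k : ℕ) (x : E)
    (hx : x ^ (2 ^ s) ^ k = x ^ (2 ^ s) + x) (i : ℕ) :
    x ^ (2 ^ s) ^ (k * 2 ^ i) = x ^ (2 ^ s) ^ (2 ^ i) + x := by
  have hadd : ∀ (y z : E) (j : ℕ), (y + z) ^ (2 ^ s) ^ j = y ^ (2 ^ s) ^ j + z ^ (2 ^ s) ^ j := by
    intro y z j
    rw [← pow_mul, add_pow_char_pow]
  induction i with
  | zero => simpa using hx
  | succ i ih =>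
    have e1 : (2 ^ s) ^ (k * 2 ^ (i + 1)) = (2 ^ s) ^ (k * 2 ^ i) * (2 ^ s) ^ (k * 2 ^ i) := by
      rw [← pow_add]; congr 1; ring
    have e2 : (2 ^ s) ^ (2 ^ (i + 1)) = (2 ^ s) ^ (2 ^ i) * (2 ^ s) ^ (2 ^ i) := by
      rw [← pow_add]; congr 1; ring
    rw [e1, pow_mul, ih, hadd, ← pow_mul, mul_comm, pow_mul, ih, hadd, ← pow_mul, ← e2]
    have := CharTwo.add_self_eq_zero (x ^ (2 ^ s) ^ (2 ^ i))
    linear_combination this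

lemma aux_fix {E : Type*} [Field E] [CharP E 2] (s m n h : ℕ) (x : E)
    (hn : n = (2 ^ m) ^ 2 - 1)
    (hx : x ^ (2 ^ s) ^ (2 ^ m) = x ^ (2 ^ s) + x) :
    x ^ (2 ^ s) ^ (n * h) = x := by
  have h1 := aux_iter s (2 ^ m) x hx m
  rw [hx, add_assoc, CharTwo.add_self_eq_zero, add_zero] at h1
  have hn' : 2 ^ m * 2 ^ m = n + 1 := by
    have : 0 < (2 ^ m) ^ 2 := by positivity
    rw [hn, ← sq]; omega
  rw [hn', pow_succ, pow_mul] at h1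
  have h2 : x ^ (2 ^ s) ^ n = x := by
    have := (iterateFrobenius_inj E 2 s)
    apply this
    simpa [iterateFrobenius_def] using h1
  induction h with
  | zero => simp
  | succ h ih => rw [mul_add, pow_add, pow_mul, ih, mul_one, h2]

lemma aux_card {M : Type*} [Field M] [Fintype M] [CharP M 2] (s m n h : ℕ) (hs : 0 < s)
    (hm : 0 < m) (hn : n = (2 ^ m) ^ 2 - 1) (hM : Fintype.card M = (2 ^ s) ^ (n * h)) :
    Nat.card {x : M | x ^ (2 ^ s) ^ (2 ^ m) = x ^ (2 ^ s) + x} = (2 ^ s) ^ (2 ^ m) := by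
  classical
  let E := AlgebraicClosure M
  have : CharP E 2 := charP_of_injective_algebraMap (algebraMap M E).injective 2
  let P : M[X] := X ^ (2 ^ s) ^ (2 ^ m) - (X ^ (2 ^ s) + X)
  have hlt : 2 ^ s < (2 ^ s) ^ (2 ^ m) := by
    conv_lhs => rw [← pow_one (2 ^ s)]
    apply Nat.pow_lt_pow_right
    · exact Nat.one_lt_pow hs.ne' (by norm_num)
    · exact Nat.one_lt_pow hm.ne' (by norm_num)
  have hlt1 : 1 < 2 ^ s := Nat.one_lt_pow hs.ne' (by norm_num)
  have hd1 : (X ^ (2 ^ s) + X : M[X]).natDegree = 2 ^ s := by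
    rw [natDegree_add_eq_left_of_natDegree_lt] <;> simp [hlt1]
  have hdeg : P.natDegree = (2 ^ s) ^ (2 ^ m) := by
    rw [natDegree_sub_eq_left_of_natDegree_lt]
    · simp
    · rw [hd1]; simpa using hlt
  have hP0 : P ≠ 0 := by
    intro h0
    rw [h0] at hdeg
    simp at hdeg
    omega
  have h20 : (2 : M) = 0 := CharTwo.two_eq_zero
  have hsep : P.Separable := by
    have : derivative P = -1 := by
      simp [P, derivative_X_pow, h20, hs.ne']
    rw [Polynomial.Separable, this]
    exact isCoprime_one_right.neg_right
  have hc := card_rootSet_eq_natDegree (K := E) hsep (IsAlgClosed.splits _)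
  rw [hdeg, ← Nat.card_eq_fintype_card] at hc
  refine Eq.trans ?_ hc
  have hmem : ∀ x : E, x ∈ P.rootSet E ↔ x ^ (2 ^ s) ^ (2 ^ m) = x ^ (2 ^ s) + x := by
    intro x
    rw [mem_rootSet_of_ne hP0]
    simp [P, sub_eq_zero]
  refine Nat.card_congr (Equiv.ofBijective
    (fun x => (⟨algebraMap M E x.1, ?_⟩ : P.rootSet E)) ⟨?_, ?_⟩)
  · rw [hmem, ← map_pow, ← map_pow, ← map_add]; exact congrArg _ x.2
  · intro x y hxy
    exact Subtype.ext ((algebraMap M E).injective (congrArg Subtype.val hxy))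
  · rintro ⟨x, hx⟩
    have hx' := (hmem x).1 hx
    obtain ⟨y, rfl⟩ := aux_mem_range (F := M) x (by rw [hM]; exact aux_fix s m n h x hn hx')
    refine ⟨⟨y, ?_⟩, rfl⟩
    rw [← map_pow, ← map_pow, ← map_add] at hx'
    exact (algebraMap M E).injective hx'

lemma aux_root {L : Type*} [Field L] [Fintype L] (q n : ℕ) (hq : 1 < q) (hn : 0 < n)
    (hL : Fintype.card L = q ^ n) (a : L) (ha : a ^ ((q ^ n - 1) / (q - 1)) = 1) :
    ∃ c : L, c ≠ 0 ∧ c ^ q = a * c := by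
  obtain ⟨S, hS⟩ : q - 1 ∣ q ^ n - 1 := by simpa using Nat.sub_dvd_pow_sub_pow q 1 n
  have hq1 : 0 < q - 1 := by omega
  have hpos : 1 < q ^ n := Nat.one_lt_pow hn.ne' hq
  have hS0 : 0 < S := by
    rcases Nat.eq_zero_or_pos S with h | h
    · subst h; omega
    · exact h
  rw [hS, Nat.mul_div_cancel_left _ hq1] at ha
  have ha0 : a ≠ 0 := by
    rintro rfl
    simp [hS0.ne'] at ha
  obtain ⟨g, hg⟩ := IsCyclic.exists_generator (α := Lˣ)
  obtain ⟨j, hj⟩ := (mem_powers_iff_mem_zpowers.2 (hg (Units.mk0 a ha0)))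
  have hj : g ^ j = Units.mk0 a ha0 := hj
  have ho : orderOf g = (q - 1) * S := by
    rw [orderOf_eq_card_of_forall_mem_zpowers hg, Nat.card_units, Nat.card_eq_fintype_card, hL, hS]
  have h1 : g ^ (j * S) = 1 := by
    rw [pow_mul, hj]; ext; simpa using ha
  have h2 := orderOf_dvd_of_pow_eq_one h1
  rw [ho] at h2
  obtain ⟨t, rfl⟩ := Nat.dvd_of_mul_dvd_mul_right hS0 h2
  refine ⟨((g ^ t : Lˣ) : L), Units.ne_zero _, ?_⟩
  have : (g ^ t) ^ q = Units.mk0 a ha0 * g ^ t := by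
    rw [← hj, ← pow_mul, ← pow_add]
    congr 1
    obtain ⟨r, rfl⟩ : ∃ r, q = r + 1 := ⟨q - 1, by omega⟩
    simp; ring
  have := congrArg Units.val this
  simpa using this

lemma aux_lam {L : Type*} [Field L] [Fintype L] (q n k : ℕ) (hq : 1 < q) (hn : 0 < n)
    (hk : 0 < k) (hnk : k * k = n + 1)
    (hL : Fintype.card L = q ^ n) (a b : L) (ha : a ^ ((q ^ n - 1) / (q - 1)) = 1)
    (hb : b = (∏ i ∈ Finset.Icc 1 (k - 1), a ^ q ^ (i * k))⁻¹) :
    ∃ l : L, l ≠ 0 ∧ l ^ q ^ k = a * l ∧ l ^ q ^ k = b * l ^ q := by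
  obtain ⟨c, hc0, hc⟩ := aux_root q n hq hn hL a ha
  have hfix : ∀ x : L, x ^ q ^ (k * k) = x ^ q := by
    intro x
    rw [hnk, pow_succ, pow_mul, ← hL, FiniteField.pow_card]
  have ha0 : a ≠ 0 := by
    rintro rfl
    rw [zero_mul] at hc
    exact hc0 (pow_eq_zero_iff (by omega) |>.1 hc)
  let l : L := ∏ i ∈ Finset.range k, c ^ q ^ (i * k)
  have hl0 : l ≠ 0 := Finset.prod_ne_zero_iff.2 fun i _ => pow_ne_zero _ hc0
  have hl1 : l ^ q ^ k = a * l := by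
    have e1 : l ^ q ^ k = ∏ i ∈ Finset.range k, c ^ q ^ ((i + 1) * k) := by
      rw [← Finset.prod_pow]
      refine Finset.prod_congr rfl fun i _ => ?_
      rw [← pow_mul, ← pow_add]; congr 2; ring
    have e2 := Finset.prod_range_succ (fun i => c ^ q ^ (i * k)) k
    rw [Finset.prod_range_succ', hfix, hc, ← e1] at e2
    simp only [zero_mul, pow_zero, pow_one] at e2
    apply mul_right_cancel₀ hc0
    rw [e2]
    simp only [l]; ring
  have hl2 : ∀ j, l ^ q ^ ((j + 1) * k) =
      l ^ q ^ k * ∏ i ∈ Finset.Icc 1 j, a ^ q ^ (i * k) := by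
    intro j
    induction j with
    | zero => simp
    | succ j ih =>
      rw [Finset.prod_Icc_succ_top (by omega), ← mul_assoc, ← ih,
        show (j + 1 + 1) * k = k + (j + 1) * k by ring, pow_add, pow_mul, hl1, mul_pow, mul_comm]
  refine ⟨l, hl0, hl1, ?_⟩
  have h3 := hl2 (k - 1)
  rw [Nat.sub_add_cancel hk, hfix] at h3
  have hp0 : ∏ i ∈ Finset.Icc 1 (k - 1), a ^ q ^ (i * k) ≠ 0 :=
    Finset.prod_ne_zero_iff.2 fun i _ => pow_ne_zero _ ha0
  rw [h3, hb]
  field_simp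

lemma aux_int {M : Type*} [Field M] (q r : ℕ) (α u : M) (hu0 : u ≠ 0)
    (hu : u ^ r = u ^ q + u) (hv : (α * u) ^ r = (α * u) ^ q + α * u) (hα : α ^ q ≠ α) :
    α ^ r ≠ α ^ q ∧ (α ^ r - α ^ q) * u ^ q = (α - α ^ r) * u := by
  rw [mul_pow, mul_pow, hu] at hv
  have e : (α ^ r - α ^ q) * u ^ q = (α - α ^ r) * u := by linear_combination hv
  refine ⟨fun h => hα ?_, e⟩
  rw [h, sub_self, zero_mul] at e
  have := (mul_eq_zero.1 e.symm).resolve_right hu0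
  exact (sub_eq_zero.1 this).symm



/-- Let `q` be even, `k ≥ 4` a power of `2`, `n = k² - 1`, and
`a, b ∈ F_{q^n}` with `N_{q^n/q}(a) = 1` and `b = (∏_{i=1}^{k-1} a^{q^{ik}})⁻¹`. For
`N = n·h` let `V` be the set of roots of `P(x) = x^{q^k} − b·x^q − a·x` in `F_{q^N}`.
Then `V` is a `k`-dimensional `F_q`-subspace of `F_{q^N}`, its orbit `C = {αV : α ≠ 0}`
consists of exactly `(q^N-1)/(q-1)` distinct subspaces, and the minimum subspace distance
between distinct members of `C` is `2k-2`. -/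
theorem stmt_19 (p q : ℕ) (hp : p.Prime) (hq : ∃ m : ℕ, 0 < m ∧ q = p ^ m)
    (hqeven : Even q)
    (K L M : Type*) [Field K] [Field L] [Field M]
    [Fintype K] [Fintype L] [Fintype M]
    [Algebra K L] [Algebra L M] [Algebra K M] [IsScalarTower K L M]
    (hcardK : Fintype.card K = q)
    (k : ℕ) (hk : 4 ≤ k) (hk2 : ∃ m : ℕ, k = 2 ^ m)
    (n : ℕ) (hnval : n = k ^ 2 - 1) (hcardL : Fintype.card L = q ^ n)
    (h N : ℕ) (hh : 0 < h) (hNval : N = n * h) (hcardM : Fintype.card M = q ^ N)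
    (a b : L) (ha : a ^ ((q ^ n - 1) / (q - 1)) = 1)
    (hb : b = (∏ i ∈ Finset.Icc 1 (k - 1), a ^ q ^ (i * k))⁻¹)
    (V : Set M)
    (hV : V = {x : M | x ^ q ^ k - algebraMap L M b * x ^ q - algebraMap L M a * x = 0})
    (C : Set (Submodule K M))
    (hC : C = {W : Submodule K M | ∃ α : M, α ≠ 0 ∧ (W : Set M) = (α * ·) '' V}) :
    (∃ W : Submodule K M, (W : Set M) = V ∧ Module.finrank K W = k)
      ∧ Nat.card C = (q ^ N - 1) / (q - 1)
      ∧ IsLeast {r : ℕ | ∃ U ∈ C, ∃ W ∈ C, U ≠ W ∧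
          r = Module.finrank K U + Module.finrank K W
                - 2 * Module.finrank K (U ⊓ W : Submodule K M)}
        (2 * k - 2) := by
  classical
  obtain ⟨s, hs, hqs⟩ := hq
  obtain ⟨m, hkm⟩ := hk2
  have hp2 : p = 2 := by
    rw [hqs] at hqeven
    exact (Nat.Prime.even_iff hp).1 ((Nat.even_pow.1 hqeven).1)
  subst hp2
  have : Fact (Nat.Prime 2) := ⟨hp⟩
  have hq1 : 1 < q := hqs ▸ Nat.one_lt_pow hs.ne' (by norm_num)
  have hKc : CharP K 2 := charP_of_card_eq_prime_pow (f := s) (by rw [hcardK, hqs])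
  have hMc : CharP M 2 := charP_of_injective_algebraMap (algebraMap K M).injective 2
  have hm : 0 < m := by
    rcases Nat.eq_zero_or_pos m with h0 | h0
    · subst h0; simp at hkm; omega
    · exact h0
  have hk16 : 16 ≤ k ^ 2 := by nlinarith
  have hnk : k * k = n + 1 := by rw [hnval, ← sq]; omega
  have hn0 : 0 < n := by omega
  obtain ⟨l', hl0', hla', hlb'⟩ := aux_lam q n k hq1 hn0 (by omega) hnk hcardL a b ha hb
  obtain ⟨l, hl0, hla, hlb⟩ : ∃ l : M, l ≠ 0 ∧ l ^ q ^ k = algebraMap L M a * l ∧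
      l ^ q ^ k = algebraMap L M b * l ^ q := by
    refine ⟨algebraMap L M l', by simpa using hl0', ?_, ?_⟩
    · rw [← map_pow, hla', map_mul]
    · rw [← map_pow, hlb', map_mul, map_pow]
  have hadd : ∀ (x y : M) (j : ℕ), (x + y) ^ q ^ j = x ^ q ^ j + y ^ q ^ j := by
    intro x y j
    rw [hqs, ← pow_mul, add_pow_char_pow]
  have hadd1 : ∀ (x y : M), (x + y) ^ q = x ^ q + y ^ q := by
    intro x y
    simpa using hadd x y 1
  have hKq : ∀ (c : K) (j : ℕ), (algebraMap K M c) ^ q ^ j = algebraMap K M c := by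
    intro c j
    rw [← map_pow, ← hcardK, FiniteField.pow_card_pow]
  have hKq1 : ∀ (c : K), (algebraMap K M c) ^ q = algebraMap K M c := by
    intro c
    simpa using hKq c 1
  have hqk0 : q ^ k ≠ 0 := by positivity
  let V0 : Submodule K M :=
    { carrier := {x : M | x ^ q ^ k = x ^ q + x}
      add_mem' := by
        intro x y hx hy
        simp only [Set.mem_setOf_eq] at hx hy ⊢
        rw [hadd, hadd1, hx, hy]; ring
      zero_mem' := by
        simp only [Set.mem_setOf_eq]
        rw [zero_pow hqk0, zero_pow (by omega), add_zero]
      smul_mem' := by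
        intro c x hx
        simp only [Set.mem_setOf_eq] at hx ⊢
        rw [Algebra.smul_def, mul_pow, mul_pow, hKq, hKq1, hx]; ring }
  have hmem : ∀ x, x ∈ V0 ↔ x ^ q ^ k = x ^ q + x := fun x => Iff.rfl
  have hV0card : Nat.card V0 = q ^ k := by
    have := aux_card (M := M) s m n h hs hm (by rw [hnval, hkm]) (by rw [hcardM, hNval, hqs])
    rw [← hqs, ← hkm] at this
    exact this
  have hV0rank : Module.finrank K V0 = k := by
    have h1 := Module.card_eq_pow_finrank (K := K) (V := V0)
    rw [← Nat.card_eq_fintype_card, hV0card, hcardK] at h1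
    exact (Nat.pow_right_injective hq1 h1).symm
  have hVl : V = (l * ·) '' (V0 : Set M) := by
    ext x
    rw [hV]
    simp only [Set.mem_setOf_eq, Set.mem_image, SetLike.mem_coe]
    have key : ∀ y : M, (l * y) ^ q ^ k - algebraMap L M b * (l * y) ^ q
        - algebraMap L M a * (l * y) = l ^ q ^ k * (y ^ q ^ k - (y ^ q + y)) := by
      intro y
      rw [mul_pow, mul_pow]
      linear_combination (y ^ q) * hlb + y * hla
    constructor
    · intro hx
      refine ⟨l⁻¹ * x, ?_, by field_simp⟩
      rw [← mul_inv_cancel_left₀ hl0 x, key] at hx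
      have := (mul_eq_zero.1 hx).resolve_left (pow_ne_zero _ hl0)
      rw [hmem]
      exact sub_eq_zero.1 this
    · rintro ⟨y, hy, rfl⟩
      rw [key, (hmem y).1 hy, sub_self, mul_zero]
  have hcoe : ∀ (u : Mˣ) (S : Submodule K M), ((u • S : Submodule K M) : Set M) =
      ((u : M) * ·) '' (S : Set M) := by
    intro u S
    rfl
  have hCorb : C = MulAction.orbit Mˣ V0 := by
    ext W
    rw [hC, MulAction.mem_orbit_iff]
    simp only [Set.mem_setOf_eq]
    constructor
    · rintro ⟨α, hα, hW⟩
      refine ⟨Units.mk0 (α * l) (mul_ne_zero hα hl0), ?_⟩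
      apply SetLike.coe_injective
      rw [hW, hVl, hcoe, Set.image_image]
      simp [mul_assoc]
    · rintro ⟨u, rfl⟩
      refine ⟨u * l⁻¹, mul_ne_zero u.ne_zero (inv_ne_zero hl0), ?_⟩
      rw [hVl, hcoe, Set.image_image]
      congr 1
      ext x
      field_simp
  have hmemsm : ∀ (u : Mˣ) (S : Submodule K M) (x : M),
      x ∈ u • S ↔ ((u⁻¹ : Mˣ) : M) * x ∈ S := by
    intro u S x
    rw [← SetLike.mem_coe, hcoe]
    constructor
    · rintro ⟨y, hy, rfl⟩
      simpa using hy
    · intro hx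
      exact ⟨_, hx, by simp⟩
  have hrank : ∀ u : Mˣ, Module.finrank K (u • V0 : Submodule K M) = k := by
    intro u
    have h1 := Module.card_eq_pow_finrank (K := K) (V := (u • V0 : Submodule K M))
    have h2 : Nat.card (u • V0 : Submodule K M) = Nat.card V0 := by
      have : Nat.card (((u : M) * ·) '' (V0 : Set M)) = Nat.card (V0 : Set M) :=
        Nat.card_image_of_injective (mul_right_injective₀ u.ne_zero) _
      exact this
    rw [← Nat.card_eq_fintype_card, h2, hV0card, hcardK] at h1
    exact (Nat.pow_right_injective hq1 h1).symm
  have hKmem : ∀ x : M, x ^ q = x → ∃ c : K, algebraMap K M c = x := by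
    intro x hx
    exact aux_mem_range x (by rw [hcardK, hx])
  -- main intersection bound
  have hint : ∀ u : Mˣ, (u : M) ^ q ≠ u →
      Module.finrank K (V0 ⊓ u • V0 : Submodule K M) ≤ 1 := by
    intro u hu
    by_cases hbot : (V0 ⊓ u • V0 : Submodule K M) = ⊥
    · rw [hbot]; simp
    obtain ⟨x, hx, hx0⟩ := Submodule.exists_mem_ne_zero_of_ne_bot hbot
    have hprop : ∀ y ∈ (V0 ⊓ u • V0 : Submodule K M), y ≠ 0 →
        ((u⁻¹ : Mˣ) : M) ^ q ^ k ≠ ((u⁻¹ : Mˣ) : M) ^ q ∧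
        (((u⁻¹ : Mˣ) : M) ^ q ^ k - ((u⁻¹ : Mˣ) : M) ^ q) * y ^ q
          = (((u⁻¹ : Mˣ) : M) - ((u⁻¹ : Mˣ) : M) ^ q ^ k) * y := by
      intro y hy hy0
      apply aux_int q (q ^ k) _ y hy0 ((hmem y).1 hy.1) ((hmem _).1 ((hmemsm u V0 y).1 hy.2))
      intro h1
      apply hu
      rw [Units.val_inv_eq_inv_val, inv_pow] at h1
      exact inv_injective h1
    obtain ⟨hne, hx1⟩ := hprop x hx hx0
    apply finrank_le_one (⟨x, hx⟩ : (V0 ⊓ u • V0 : Submodule K M))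
    rintro ⟨y, hy⟩
    by_cases hy0 : y = 0
    · exact ⟨0, by ext; simp [hy0]⟩
    obtain ⟨-, hy1⟩ := hprop y hy hy0
    obtain ⟨c, hc⟩ := hKmem (y / x) (by
      have hxq : x ^ q ≠ 0 := pow_ne_zero _ hx0
      rw [div_pow, div_eq_div_iff hxq hx0]
      apply mul_left_cancel₀ (sub_ne_zero.2 hne)
      linear_combination x * hy1 - y * hx1)
    refine ⟨c, ?_⟩
    ext
    simp only [Submodule.coe_smul, Algebra.smul_def, hc]
    field_simp
  have hstab : ∀ u : Mˣ, u • V0 = V0 ↔ (u : M) ^ q = u := by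
    intro u
    constructor
    · intro hu
      by_contra hne
      have := hint u hne
      rw [hu, inf_idem, hV0rank] at this
      omega
    · intro hu
      obtain ⟨c, hc⟩ := hKmem _ hu
      have hc0 : c ≠ 0 := by
        rintro rfl
        exact u.ne_zero (by rw [← hc, map_zero])
      ext x
      rw [hmemsm, Units.val_inv_eq_inv_val, ← hc, ← map_inv₀, ← Algebra.smul_def]
      exact V0.smul_mem_iff (inv_ne_zero hc0)
  refine ⟨⟨Units.mk0 l hl0 • V0, ?_, hrank _⟩, ?_, ?_, ?_⟩
  · rw [hcoe, hVl]; rfl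
  · have h1 := MulAction.card_orbit_mul_card_stabilizer_eq_card_group Mˣ V0
    have h2 : Nat.card (MulAction.stabilizer Mˣ V0) = q - 1 := by
      have : Nat.card Kˣ = q - 1 := by
        rw [Nat.card_units, Nat.card_eq_fintype_card, hcardK]
      rw [← this]
      symm
      refine Nat.card_congr (Equiv.ofBijective
        (fun c => ⟨Units.map (algebraMap K M).toMonoidHom c, ?_⟩) ⟨?_, ?_⟩)
      · rw [MulAction.mem_stabilizer_iff, hstab]
        exact hKq1 _
      · intro c d hcd
        have := congrArg (fun z => ((z.1 : Mˣ) : M)) hcd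
        exact Units.ext ((algebraMap K M).injective this)
      · rintro ⟨u, hu⟩
        rw [MulAction.mem_stabilizer_iff, hstab] at hu
        obtain ⟨c, hc⟩ := hKmem _ hu
        have hc0 : c ≠ 0 := by
          rintro rfl
          exact u.ne_zero (by rw [← hc, map_zero])
        exact ⟨Units.mk0 c hc0, Subtype.ext (Units.ext hc)⟩
    rw [← Nat.card_eq_fintype_card, ← Nat.card_eq_fintype_card, ← Nat.card_eq_fintype_card, h2,
      Nat.card_units, Nat.card_eq_fintype_card (α := M), hcardM] at h1
    rw [hCorb, ← h1, Nat.mul_div_cancel _ (by omega)]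
  · -- attained
    have hV0nt : 1 < Module.finrank K V0 := by rw [hV0rank]; omega
    obtain ⟨x, hx0⟩ : ∃ x : V0, x ≠ 0 := by
      have : Nontrivial V0 := Module.nontrivial_of_finrank_pos (R := K) (by omega)
      exact exists_ne 0
    obtain ⟨y, hy⟩ : ∃ y : V0, ∀ c : K, c • x ≠ y := by
      by_contra hcon
      push Not at hcon
      have := finrank_le_one x hcon
      omega
    have hx0' : (x : M) ≠ 0 := by simpa using hx0
    have hy0' : (y : M) ≠ 0 := by
      intro h0
      apply hy 0
      ext
      simp [h0]
    let u : Mˣ := Units.mk0 ((y : M) / x) (div_ne_zero hy0' hx0')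
    have hu : (u : M) ^ q ≠ u := by
      intro h1
      obtain ⟨c, hc⟩ := hKmem _ h1
      apply hy c
      ext
      simp only [Submodule.coe_smul, Algebra.smul_def, hc, u, Units.val_mk0]
      field_simp
    have hle := hint u hu
    have hymem : (y : M) ∈ (V0 ⊓ u • V0 : Submodule K M) := by
      refine ⟨y.2, (hmemsm _ _ _).2 ?_⟩
      have : ((u⁻¹ : Mˣ) : M) * y = x := by
        rw [Units.val_inv_eq_inv_val]
        simp only [u, Units.val_mk0]
        field_simp
      rw [this]; exact x.2
    have hge : 0 < Module.finrank K (V0 ⊓ u • V0 : Submodule K M) := by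
      have : Nontrivial (V0 ⊓ u • V0 : Submodule K M) :=
        ⟨⟨⟨y, hymem⟩, 0, fun h0 => hy0' (congrArg Subtype.val h0)⟩⟩
      exact Module.finrank_pos
    refine ⟨V0, ?_, u • V0, ?_, ?_, ?_⟩
    · rw [hCorb]; exact MulAction.mem_orbit_self _
    · rw [hCorb]; exact MulAction.mem_orbit _ _
    · intro h0
      exact hu ((hstab u).1 h0.symm)
    · rw [hV0rank, hrank]; omega
  · rintro r ⟨U, hU, W, hW, hne, rfl⟩
    rw [hCorb] at hU hW
    obtain ⟨u, rfl⟩ := hU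
    obtain ⟨w, rfl⟩ := hW
    simp only [] at hne ⊢
    have hne' : ((u⁻¹ * w : Mˣ) : M) ^ q ≠ ((u⁻¹ * w : Mˣ) : M) := by
      intro h0
      apply hne
      have := (hstab _).2 h0
      rw [mul_smul, inv_smul_eq_iff] at this
      exact this.symm
    have hle := hint _ hne'
    have heq : Module.finrank K (u • V0 ⊓ w • V0 : Submodule K M) =
        Module.finrank K (V0 ⊓ (u⁻¹ * w) • V0 : Submodule K M) := by
      have e : (u • V0 ⊓ w • V0 : Submodule K M) = u • (V0 ⊓ (u⁻¹ * w) • V0) := by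
        ext z
        rw [Submodule.mem_inf, hmemsm, hmemsm, hmemsm, Submodule.mem_inf, hmemsm]
        simp [mul_assoc]
      rw [e]
      exact (LinearEquiv.finrank_eq (Submodule.equivMapOfInjective
        (DistribSMul.toLinearMap K M u) (MulAction.injective u) _)).symm
    rw [hrank, hrank, heq]
    omega
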